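/- Let h ≥ 1 be an integer, ν_0 ∈ (0,1), c_0 > 0, and m = (m_1,…,m_h) ∈ ℝ^h with m ≠ 0. Let A := { (x_1,…,x_h) ∈ ℝ^h : x_i m_i ≥ 0 for every i ∈ {1,…,h}, and x_j = 0 whenever m_j = 0 }. Then for every (x_1,…,x_h) ∈ ℝ^h, as an identity in [0,∞]: sup_{(θ_1,…,θ_h) ∈ ℝ^h} { Σ_{i=1}^h θ_i x_i − (c_0 Σ_{i=1}^h m_i θ_i · 1{θ_i m_i ≥ 0})^{1/ν_0} } equals max{ V_{ν_0, c_0 m_i}(x_i) : i ∈ {1,…,h} } if (x_1,…,x_h) ∈ A, and equals +∞ if (x_1,…,x_h) ∉ A. (This is Proposition 4.2, the explicit moderate-deviation rate function in the case ν_0 > max{ν_1,…,ν_h} with m ≠ 0.) -/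

import Mathlib

open Set Filter
open scoped ENNReal

/-- `V_{ν,m} : ℝ → [0,∞]`: for `m ≠ 0`,
`V_{ν,m}(x) = (ν^{ν/(1-ν)} - ν^{1/(1-ν)}) (x/m)^{1/(1-ν)}` if `x/m ≥ 0` and `+∞` if `x/m < 0`;
for `m = 0`, `V_{ν,0}(0) = 0` and `V_{ν,0}(x) = +∞` for `x ≠ 0`. -/
noncomputable def Vfun (ν m x : ℝ) : EReal :=
  if m = 0 then (if x = 0 then (0 : EReal) else ⊤)
  else if 0 ≤ x / m then
    (((ν ^ (ν / (1 - ν)) - ν ^ (1 / (1 - ν))) * (x / m) ^ (1 / (1 - ν)) : ℝ) : EReal)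
  else ⊤

lemma aux_K (ν : ℝ) (h0 : 0 < ν) (h1 : ν < 1) :
    ν ^ (1 / (1 - ν)) = ν ^ (ν / (1 - ν)) * ν := by
  have h2 : (1 - ν) ≠ 0 := by linarith
  have : 1 / (1 - ν) = ν / (1 - ν) + 1 := by field_simp; ring
  rw [this, Real.rpow_add h0, Real.rpow_one]

lemma aux_young (ν : ℝ) (h0 : 0 < ν) (h1 : ν < 1) (t a : ℝ) (ht : 0 ≤ t) (ha : 0 ≤ a) :
    t * a - t ^ (1 / ν) ≤ (ν ^ (ν / (1 - ν)) - ν ^ (1 / (1 - ν))) * a ^ (1 / (1 - ν)) := by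
  have h2 : 0 < (1 - ν) := by linarith
  have hpq : (1 / ν).HolderConjugate (1 / (1 - ν)) := by
    rw [Real.holderConjugate_iff]
    refine ⟨by rw [lt_div_iff₀ h0]; linarith, by field_simp; ring⟩
  have hv : 0 < ν ^ (-ν) := Real.rpow_pos_of_pos h0 _
  have hv' : 0 < ν ^ ν := Real.rpow_pos_of_pos h0 _
  have key := Real.young_inequality_of_nonneg (a := t * ν ^ (-ν)) (b := a * ν ^ ν)
    (by positivity) (by positivity) hpq
  rw [Real.mul_rpow ht hv.le, Real.mul_rpow ha hv'.le, ← Real.rpow_mul h0.le,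
    ← Real.rpow_mul h0.le] at key
  have e1 : -ν * (1 / ν) = -1 := by field_simp
  have e2 : ν * (1 / (1 - ν)) = ν / (1 - ν) := by ring
  have e3 : t * ν ^ (-ν) * (a * ν ^ ν) = t * a := by
    rw [Real.rpow_neg h0.le]; field_simp
  rw [e1, e2, e3, Real.rpow_neg_one] at key
  have e4 : t ^ (1 / ν) * ν⁻¹ / (1 / ν) = t ^ (1 / ν) := by field_simp
  rw [e4] at key
  rw [aux_K ν h0 h1]
  have e5 : a ^ (1 / (1 - ν)) * ν ^ (ν / (1 - ν)) / (1 / (1 - ν))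
      = (ν ^ (ν / (1 - ν)) - ν ^ (ν / (1 - ν)) * ν) * a ^ (1 / (1 - ν)) := by
    rw [div_div_eq_mul_div]; ring
  linarith

lemma aux_attain (ν : ℝ) (h0 : 0 < ν) (h1 : ν < 1) (a : ℝ) (ha : 0 ≤ a) :
    ∃ t : ℝ, 0 ≤ t ∧
      t * a - t ^ (1 / ν) = (ν ^ (ν / (1 - ν)) - ν ^ (1 / (1 - ν))) * a ^ (1 / (1 - ν)) := by
  have h2 : 0 < (1 - ν) := by linarith
  refine ⟨(ν * a) ^ (ν / (1 - ν)), by positivity, ?_⟩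
  have e : ν / (1 - ν) * (1 / ν) = 1 / (1 - ν) := by field_simp
  rw [← Real.rpow_mul (by positivity), e, Real.mul_rpow h0.le ha, Real.mul_rpow h0.le ha]
  have e' : a ^ (1 / (1 - ν)) = a ^ (ν / (1 - ν)) * a := by
    have : 1 / (1 - ν) = ν / (1 - ν) + 1 := by field_simp; ring
    rw [this, Real.rpow_add_one' ha (by positivity)]
  rw [e']; ring

lemma aux_V (ν c m x : ℝ) (h0 : 0 < ν) (h1 : ν < 1) (hc : 0 < c) (hx : 0 ≤ x * m)
    (hx0 : m = 0 → x = 0) :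
    0 ≤ x / (c * m) ∧ Vfun ν (c * m) x =
    (((ν ^ (ν / (1 - ν)) - ν ^ (1 / (1 - ν))) * (x / (c * m)) ^ (1 / (1 - ν)) : ℝ) : EReal) := by
  have h2 : 0 < (1 - ν) := by linarith
  by_cases hm : m = 0
  · have := hx0 hm
    subst this; subst hm
    have : (0:ℝ) ^ (1 / (1 - ν)) = 0 := Real.zero_rpow (by positivity)
    simp only [Vfun, mul_zero, if_true, zero_div, this]
    simp
  · have hp : 0 ≤ x / (c * m) := by
      have : x / (c * m) = (x * m) / (c * m ^ 2) := by field_simp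
      rw [this]; positivity
    refine ⟨hp, ?_⟩
    rw [Vfun, if_neg (mul_ne_zero hc.ne' hm), if_pos hp]

lemma aux_single {h : ℕ} (ν c : ℝ) (m x : Fin h → ℝ) (j : Fin h) (t : ℝ) :
    (∑ i, (Pi.single j t : Fin h → ℝ) i * x i)
      - (c * ∑ i, m i * (Pi.single j t : Fin h → ℝ) i *
        (if 0 ≤ (Pi.single j t : Fin h → ℝ) i * m i then 1 else 0)) ^ (1 / ν)
    = t * x j - (c * (m j * t * (if 0 ≤ t * m j then 1 else 0))) ^ (1 / ν) := by
  rw [Finset.sum_eq_single j, Finset.sum_eq_single j]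
  · simp
  · intro b _ hb; simp [hb]
  · simp
  · intro b _ hb; simp [hb]
  · simp

/-- Proposition 4.2: explicit moderate-deviation rate function in the case
`ν_0 > max ν_i`, `m ≠ 0`.  With `A = {x : x_i m_i ≥ 0 ∀i, and x_j = 0 whenever m_j = 0}`,
`sup_θ {Σ_i θ_i x_i - (c_0 Σ_i m_i θ_i 1{θ_i m_i ≥ 0})^{1/ν_0}}` equals
`max_i V_{ν_0, c_0 m_i}(x_i)` on `A` and `+∞` off `A`. -/
theorem stmt_7 (h : ℕ) (hh : 1 ≤ h) (ν0 : ℝ) (hν0 : ν0 ∈ Set.Ioo (0 : ℝ) 1)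
    (c0 : ℝ) (hc0 : 0 < c0) (m : Fin h → ℝ) (hm : m ≠ 0) (x : Fin h → ℝ) :
    (((∀ i, 0 ≤ x i * m i) ∧ (∀ j, m j = 0 → x j = 0)) →
      (⨆ θ : Fin h → ℝ,
          (((∑ i, θ i * x i)
            - (c0 * ∑ i, m i * θ i * (if 0 ≤ θ i * m i then 1 else 0)) ^ (1 / ν0) : ℝ) : EReal))
        = ⨆ i, Vfun ν0 (c0 * m i) (x i)) ∧
    ((¬ ((∀ i, 0 ≤ x i * m i) ∧ (∀ j, m j = 0 → x j = 0))) →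
      (⨆ θ : Fin h → ℝ,
          (((∑ i, θ i * x i)
            - (c0 * ∑ i, m i * θ i * (if 0 ≤ θ i * m i then 1 else 0)) ^ (1 / ν0) : ℝ) : EReal))
        = ⊤) := by
  obtain ⟨h0, h1⟩ := hν0
  have h2 : 0 < 1 - ν0 := by linarith
  constructor
  · rintro ⟨hA, hB⟩
    have hV := fun i => aux_V ν0 c0 (m i) (x i) h0 h1 hc0 (hA i) (hB i)
    apply le_antisymm
    · apply iSup_le
      intro θ
      haveI : Nonempty (Fin h) := ⟨⟨0, hh⟩⟩
      obtain ⟨k, hk⟩ := Finite.exists_max (fun i => x i / (c0 * m i))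
      refine le_trans ?_ (le_iSup _ k)
      rw [(hV k).2, EReal.coe_le_coe_iff]
      have hs : ∀ i, 0 ≤ m i * θ i * (if 0 ≤ θ i * m i then (1:ℝ) else 0) := by
        intro i
        split_ifs with hi
        · linarith
        · simp
      have hS : 0 ≤ c0 * ∑ i, m i * θ i * (if 0 ≤ θ i * m i then (1:ℝ) else 0) :=
        mul_nonneg hc0.le (Finset.sum_nonneg fun i _ => hs i)
      refine le_trans ?_ (aux_young ν0 h0 h1 _ _ hS (hV k).1)
      refine sub_le_sub_right ?_ _
      rw [mul_assoc, Finset.sum_mul, Finset.mul_sum]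
      apply Finset.sum_le_sum
      intro i _
      have hle : c0 * (m i * θ i * (if 0 ≤ θ i * m i then (1:ℝ) else 0) * (x i / (c0 * m i)))
          ≤ c0 * (m i * θ i * (if 0 ≤ θ i * m i then (1:ℝ) else 0) * (x k / (c0 * m k))) :=
        mul_le_mul_of_nonneg_left (mul_le_mul_of_nonneg_left (hk i) (hs i)) hc0.le
      refine le_trans ?_ hle
      by_cases hmi : m i = 0
      · simp [hB i hmi, hmi]
      · split_ifs with hi
        · apply le_of_eq; field_simp
        · have hneg : θ i * m i < 0 := not_le.mp hi
          have h3 : θ i * x i * (m i) ^ 2 ≤ 0 := by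
            have := mul_nonpos_of_nonpos_of_nonneg hneg.le (hA i)
            linarith [show θ i * x i * (m i) ^ 2 = θ i * m i * (x i * m i) by ring]
          have hm2 : 0 < (m i) ^ 2 := by positivity
          have h4 : θ i * x i ≤ 0 := by
            by_contra hc
            push Not at hc
            have := mul_pos hc hm2
            linarith
          simpa using h4
    · apply iSup_le
      intro i
      rw [(hV i).2]
      by_cases hmi : m i = 0
      · refine le_trans ?_ (le_iSup _ (0 : Fin h → ℝ))
        rw [EReal.coe_le_coe_iff]
        simp [hmi, Real.zero_rpow (inv_ne_zero h0.ne'), Real.zero_rpow (inv_ne_zero h2.ne')]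
      · obtain ⟨t, ht, hte⟩ := aux_attain ν0 h0 h1 _ (hV i).1
        refine le_trans ?_ (le_iSup _ (Pi.single i (t / (c0 * m i)) : Fin h → ℝ))
        rw [EReal.coe_le_coe_iff, aux_single, ← hte]
        have e1 : t / (c0 * m i) * m i = t / c0 := by field_simp
        have e2 : c0 * (m i * (t / (c0 * m i)) * 1) = t := by field_simp
        rw [e1, if_pos (by positivity), e2]
        apply le_of_eq; ring
  · intro hn
    have hj : ∃ j, x j ≠ 0 ∧ (x j * m j < 0 ∨ m j = 0) := by
      by_contra hc
      push Not at hc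
      apply hn
      refine ⟨fun i => ?_, fun j hj => ?_⟩
      · by_cases hx : x i = 0
        · simp [hx]
        · exact (hc i hx).1
      · by_contra hx
        exact (hc j hx).2 hj
    obtain ⟨j, hxj, hj⟩ := hj
    rw [EReal.eq_top_iff_forall_lt]
    intro y
    have hx2 : 0 < x j ^ 2 := by positivity
    set n : ℝ := (|y| + 1) / x j ^ 2 with hnd
    have hnp : 0 < n := by positivity
    refine lt_of_lt_of_le ?_ (le_iSup _ (Pi.single j (n * x j) : Fin h → ℝ))
    rw [EReal.coe_lt_coe_iff, aux_single]
    have hz : m j * (n * x j) * (if 0 ≤ n * x j * m j then (1:ℝ) else 0) = 0 := by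
      rcases hj with hj | hj
      · rw [if_neg, mul_zero]
        have := mul_pos_of_neg_of_neg hj (neg_lt_zero.mpr hnp)
        nlinarith
      · simp [hj]
    rw [hz, mul_zero, Real.zero_rpow (by positivity)]
    have : n * x j * x j = |y| + 1 := by rw [hnd]; field_simp
    rw [this]
    linarith [le_abs_self y]
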